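/- Let π* be a cyclic combinatorial datum over a d-letter alphabet and γ : π → π* a Rauzy path of length r ending at π*, with return-time vector q^(r) = B_γ 1⃗ and N := Σ_χ q^(r)_χ. Then the map [α,i] ↦ [α,i−1] on the label set ℐ(γ) (the quotient of 𝒜 × ℤ by the identifications (α,i) ∼ (β,j) iff π_t(β) = π_b(α) and i − j = q^(r)_α + h(β,r) − h(α,r)) is a cyclic permutation of ℐ(γ) of maximal order N = |ℐ(γ)|. -/

import Mathlib

namespace RauzyLabels

variable {A : Type*} [Fintype A] [DecidableEq A]

/-- Return-time vector `q^(k) = B_γ 1⃗` of a Rauzy path, given by the list of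
winners `w` and losers `l` of its arrows. -/
def qvec (w l : ℕ → A) : ℕ → A → ℕ
  | 0 => fun _ => 1
  | (k + 1) => fun a =>
      if a = l k then qvec w l k a + qvec w l k (w k) else qvec w l k a

/-- Top Rauzy operation with winner `αt` and loser `αb` (0-indexed positions). -/
def TopRelLab {d : ℕ} (P Q : (A ≃ Fin d) × (A ≃ Fin d)) (αt αb : A) : Prop :=
  (P.1 αt : ℕ) = d - 1 ∧ (P.2 αb : ℕ) = d - 1 ∧
    Q.1 = P.1 ∧
    (∀ χ : A, (P.2 χ : ℕ) ≤ (P.2 αt : ℕ) → (Q.2 χ : ℕ) = (P.2 χ : ℕ)) ∧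
    (Q.2 αb : ℕ) = (P.2 αt : ℕ) + 1 ∧
    (∀ χ : A, χ ≠ αb → (P.2 αt : ℕ) < (P.2 χ : ℕ) → (Q.2 χ : ℕ) = (P.2 χ : ℕ) + 1)

/-- Bottom Rauzy operation with winner `αb` and loser `αt`. -/
def BotRelLab {d : ℕ} (P Q : (A ≃ Fin d) × (A ≃ Fin d)) (αb αt : A) : Prop :=
  (P.1 αt : ℕ) = d - 1 ∧ (P.2 αb : ℕ) = d - 1 ∧
    Q.2 = P.2 ∧
    (∀ χ : A, (P.1 χ : ℕ) ≤ (P.1 αb : ℕ) → (Q.1 χ : ℕ) = (P.1 χ : ℕ)) ∧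
    (Q.1 αt : ℕ) = (P.1 αb : ℕ) + 1 ∧
    (∀ χ : A, χ ≠ αt → (P.1 αb : ℕ) < (P.1 χ : ℕ) → (Q.1 χ : ℕ) = (P.1 χ : ℕ) + 1)

/-- One Rauzy arrow with winner `w` and loser `l`. -/
def StepLab {d : ℕ} (P Q : (A ≃ Fin d) × (A ≃ Fin d)) (w l : A) : Prop :=
  TopRelLab P Q w l ∨ BotRelLab P Q w l

/-- The identification `(α,i) ∼ (β,j) ⟺ π*_t(β) = π*_b(α) ∧
`i − j = q_α + h(β) − h(α)` generating the label set `ℐ(γ)`. -/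
def labelRel {d : ℕ} (Pstar : (A ≃ Fin d) × (A ≃ Fin d)) (q h : A → ℕ)
    (p p' : A × ℤ) : Prop :=
  Pstar.1 p'.1 = Pstar.2 p.1 ∧
    p.2 - p'.2 = (q p.1 : ℤ) + (h p'.1 : ℤ) - (h p.1 : ℤ)

/-!
Write `τ = π_t⁻¹ ∘ π_b`, a `d`-cycle on the letters. In the coordinate `y = i + h(α)` the
identifications read `(τ α, y) ∼ (α, y + q α)`. Going once around the cycle gives
`(α, y) ∼ (α, y + N)` with `N = Σ q`, so each label is `(α, y)` for one fixed `α`, where `y` matters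
at most modulo `N`. Conversely `Σ q = 0` in `ℤ/N`, so `q` is a coboundary over the cycle: there is
`p` with `p ∘ τ = p + q`. Then `y + p(α)` is well defined modulo `N` on labels, identifies them
with `ℤ/N`, and turns the shift into `t ↦ t - 1`.
-/

section CyclicPerm

open Equiv

variable {α β : Type*}

theorem isCycle_permCongr (e : α ≃ β) {f : Perm α} (hf : f.IsCycle) :
    (e.permCongr f).IsCycle := by
  obtain ⟨x, hx, hsame⟩ := hf
  refine ⟨e x, by simpa using hx, fun y hy => ?_⟩
  obtain ⟨n, hn⟩ := hsame (y := e.symm y) (by simpa [eq_symm_apply] using hy)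
  refine ⟨n, ?_⟩
  rw [← e.permCongrHom_coe, ← map_zpow]
  simp [hn]

theorem orderOf_permCongr (e : α ≃ β) (f : Perm α) : orderOf (e.permCongr f) = orderOf f :=
  e.permCongrHom.orderOf_eq f

theorem isCycleOn_univ_of_orderOf_eq_card [Fintype α] {f : Perm α} (hf : f.IsCycle)
    (hcard : orderOf f = Fintype.card α) : f.IsCycleOn Set.univ := by
  classical
  have hsupp : f.support = Finset.univ := by
    rw [← Finset.card_eq_iff_eq_univ, ← hf.orderOf, hcard]
  have hmoved : {x | f x ≠ x} = Set.univ := by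
    rw [← Perm.coe_support_eq_set_support, hsupp, Finset.coe_univ]
  exact hmoved ▸ hf.isCycleOn

theorem orderOf_addRight {G : Type*} [AddGroup G] (g : G) :
    orderOf (Equiv.addRight g) = addOrderOf g := by
  refine Nat.dvd_right_iff_eq.1 fun n => ?_
  rw [orderOf_dvd_iff_pow_eq_one, addOrderOf_dvd_iff_nsmul_eq_zero, nsmul_addRight]
  exact ⟨fun hn => by simpa using DFunLike.congr_fun hn 0, fun hn => by rw [hn, addRight_zero]⟩

theorem isCycle_addRight {G : Type*} [AddGroup G] {g : G} (hg : g ≠ 0)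
    (hgen : ∀ x, x ∈ AddSubgroup.zmultiples g) : (Equiv.addRight g).IsCycle := by
  refine ⟨0, by simpa using hg, fun y _ => ?_⟩
  obtain ⟨n, hn⟩ := hgen y
  exact ⟨n, by simpa [zsmul_addRight] using hn⟩

end CyclicPerm

section BirkhoffSum

variable {α M : Type*} {τ : Equiv.Perm α} {s : Finset α} {a : α}

theorem birkhoffSum_card_of_isCycleOn [AddCommMonoid M] (hτ : τ.IsCycleOn s) (ha : a ∈ s)
    (g : α → M) : birkhoffSum τ g s.card a = ∑ b ∈ s, g b := by
  simp only [birkhoffSum, Equiv.Perm.iterate_eq_pow]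
  refine Finset.sum_bij (fun i _ => (τ ^ i) a) ?_ ?_ ?_ fun _ _ => rfl
  · exact fun i _ => (hτ.1.perm_pow i).mapsTo ha
  · intro i hi j hj hij
    exact ((hτ.pow_apply_eq_pow_apply ha).1 hij).eq_of_lt_of_lt
      (Finset.mem_range.1 hi) (Finset.mem_range.1 hj)
  · intro b hb
    obtain ⟨n, hn, rfl⟩ := hτ.exists_pow_eq ha hb
    exact ⟨n, Finset.mem_range.2 hn, rfl⟩

theorem birkhoffSum_card_mul_of_isCycleOn [AddCommMonoid M] (hτ : τ.IsCycleOn s) (ha : a ∈ s)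
    (g : α → M) (m : ℕ) : birkhoffSum τ g (s.card * m) a = m • ∑ b ∈ s, g b := by
  induction m with
  | zero => simp
  | succ m ih =>
    have hreturn : τ^[s.card * m] a = a := by
      rw [Equiv.Perm.iterate_eq_pow, hτ.pow_apply_eq ha]
      exact dvd_mul_right _ _
    rw [Nat.mul_succ, birkhoffSum_add, ih, hreturn, birkhoffSum_card_of_isCycleOn hτ ha, succ_nsmul]

theorem birkhoffSum_eq_of_modEq [AddCommMonoid M] (hτ : τ.IsCycleOn s) (ha : a ∈ s)
    {g : α → M} (hg : ∑ b ∈ s, g b = 0) {m n : ℕ} (hmn : m ≡ n [MOD s.card]) :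
    birkhoffSum τ g m a = birkhoffSum τ g n a := by
  have hmod (k : ℕ) : birkhoffSum τ g k a = birkhoffSum τ g (k % s.card) a := by
    have hmem : τ^[k % s.card] a ∈ s := hτ.1.mapsTo.iterate _ ha
    conv_lhs => rw [← Nat.mod_add_div k s.card, birkhoffSum_add]
    rw [birkhoffSum_card_mul_of_isCycleOn hτ hmem, hg, smul_zero, add_zero]
  rw [hmod m, hmod n, hmn]

theorem exists_potential_of_sum_eq_zero [AddCommMonoid M] (hτ : τ.IsCycleOn s) {g : α → M}
    (hg : ∑ b ∈ s, g b = 0) : ∃ p : α → M, ∀ b ∈ s, p (τ b) = p b + g b := by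
  classical
  obtain rfl | ⟨a, ha⟩ := s.eq_empty_or_nonempty
  · exact ⟨0, by simp⟩
  have hreach (b : α) : ∃ n, b ∈ s → (τ ^ n) a = b := by
    by_cases hb : b ∈ s
    · obtain ⟨n, -, hn⟩ := hτ.exists_pow_eq ha hb
      exact ⟨n, fun _ => hn⟩
    · exact ⟨0, fun h => absurd h hb⟩
  choose time htime using hreach
  refine ⟨fun b => birkhoffSum τ g (time b) a, fun b hb => ?_⟩
  have hstep : time (τ b) ≡ time b + 1 [MOD s.card] := by
    rw [← hτ.pow_apply_eq_pow_apply ha, htime _ (hτ.1.mapsTo hb), pow_succ', Equiv.Perm.mul_apply,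
      htime b hb]
  change birkhoffSum τ g (time (τ b)) a = birkhoffSum τ g (time b) a + g b
  rw [birkhoffSum_eq_of_modEq hτ ha hg hstep, birkhoffSum_succ, Equiv.Perm.iterate_eq_pow,
    htime b hb]

end BirkhoffSum

section LabelSet

variable {α : Type*} {d : ℕ} (π : (α ≃ Fin d) × (α ≃ Fin d)) (q h : α → ℕ)

/-- The monodromy `π_t⁻¹ ∘ π_b` acting on letters; `π_t` conjugates it to the permutation
`σ(π) = π_b ∘ π_t⁻¹` of positions. -/
def monodromy : Equiv.Perm α := π.2.trans π.1.symm

/-- The label set `ℐ(γ)` of a path with terminal datum `π` and return-time vector `q`. -/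
abbrev LabelSet : Type _ := Quotient (Relation.EqvGen.setoid (labelRel π q h))

/-- The label `[a, y - h a]`. With this offset the generating identifications no longer involve
`h`; see `level_monodromy`. -/
def level (a : α) (y : ℤ) : LabelSet π q h := Quotient.mk _ (a, y - h a)

theorem mk_eq_level (x : α × ℤ) :
    (Quotient.mk _ x : LabelSet π q h) = level π q h x.1 (x.2 + h x.1) := by
  simp [level]

variable {π q h}

theorem labelRel_iff {x y : α × ℤ} :
    labelRel π q h x y ↔
      y.1 = monodromy π x.1 ∧ x.2 - y.2 = (q x.1 : ℤ) + h y.1 - h x.1 := by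
  simp only [labelRel, monodromy, Equiv.trans_apply, Equiv.eq_symm_apply]

theorem level_monodromy (a : α) (y : ℤ) :
    level π q h (monodromy π a) y = level π q h a (y + q a) := by
  refine (Quotient.sound (Relation.EqvGen.rel _ _ (labelRel_iff.2 ⟨rfl, ?_⟩))).symm
  ring

theorem level_iterate_monodromy (n : ℕ) (a : α) (y : ℤ) :
    level π q h ((monodromy π)^[n] a) y =
      level π q h a (y + birkhoffSum (monodromy π) (fun b => (q b : ℤ)) n a) := by
  induction n generalizing y with
  | zero => simp
  | succ n ih =>
    rw [Function.iterate_succ_apply', level_monodromy, ih, birkhoffSum_succ, add_right_comm,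
      add_assoc]

theorem exists_eq_level [Finite α] (hπ : (monodromy π).IsCycleOn Set.univ) (a : α)
    (x : LabelSet π q h) : ∃ y, x = level π q h a y := by
  induction x using Quotient.inductionOn with | h x =>
  obtain ⟨n, hn⟩ := hπ.exists_pow_eq' Set.finite_univ (Set.mem_univ a) (Set.mem_univ x.1)
  rw [mk_eq_level, ← hn, ← Equiv.Perm.iterate_eq_pow, level_iterate_monodromy]
  exact ⟨_, rfl⟩

section Coordinate

variable {R : Type*} [AddCommGroupWithOne R] {p : α → R}

theorem add_potential_eq_of_labelRel (hp : ∀ a, p (monodromy π a) = p a + q a) {x y : α × ℤ}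
    (hxy : labelRel π q h x y) :
    (x.2 : R) + h x.1 + p x.1 = y.2 + h y.1 + p y.1 := by
  obtain ⟨hletter, hheight⟩ := labelRel_iff.1 hxy
  have hheight' : (x.2 : R) = y.2 + (q x.1 + h y.1 - h x.1) := by
    rw [← sub_eq_iff_eq_add']
    exact_mod_cast congrArg (Int.cast : ℤ → R) hheight
  rw [hheight', hletter, hp]
  abel

/-- The coordinate `[a, i] ↦ i + h a + p a` on labels attached to a potential `p` of the return
times, that is, a function whose increments along the monodromy are `q`. -/
def labelCoord (hp : ∀ a, p (monodromy π a) = p a + q a) : LabelSet π q h → R :=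
  Quotient.lift (fun x => (x.2 : R) + h x.1 + p x.1) fun _ _ hxy =>
    Setoid.eqvGen_le (s := Setoid.ker fun x => (x.2 : R) + h x.1 + p x.1)
      (fun _ _ hrel => add_potential_eq_of_labelRel hp hrel) hxy

theorem labelCoord_level (hp : ∀ a, p (monodromy π a) = p a + q a) (a : α) (y : ℤ) :
    labelCoord hp (level π q h a y) = y + p a := by
  simp [labelCoord, level]

end Coordinate

variable [Fintype α]

theorem level_add_sum (hπ : (monodromy π).IsCycleOn Set.univ) (a : α) (y : ℤ) :
    level π q h a (y + ∑ b, (q b : ℤ)) = level π q h a y := by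
  rw [← Finset.coe_univ] at hπ
  have ha := Finset.mem_univ a
  rw [← birkhoffSum_card_of_isCycleOn hπ ha, ← level_iterate_monodromy,
    Equiv.Perm.iterate_eq_pow, hπ.pow_card_apply ha]

theorem level_eq_of_intCast_eq (hπ : (monodromy π).IsCycleOn Set.univ) (a : α) {y z : ℤ}
    (hyz : (y : ZMod (∑ b, q b)) = z) : level π q h a y = level π q h a z := by
  obtain ⟨m, hm⟩ := (ZMod.intCast_eq_intCast_iff_dvd_sub _ _ _).1 hyz
  have hperiodic : Function.Periodic (level π q h a) (∑ b, (q b : ℤ)) := level_add_sum hπ a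
  have hz : z = y + m • ∑ b, (q b : ℤ) := by
    rw [smul_eq_mul, mul_comm, ← Nat.cast_sum, ← hm, add_sub_cancel]
  rw [hz, hperiodic.zsmul m y]

theorem labelCoord_bijective [Nonempty α] (hπ : (monodromy π).IsCycleOn Set.univ)
    {p : α → ZMod (∑ b, q b)} (hp : ∀ a, p (monodromy π a) = p a + q a) :
    Function.Bijective (labelCoord hp : LabelSet π q h → _) := by
  obtain ⟨a⟩ := ‹Nonempty α›
  constructor
  · intro x x' hxx'
    obtain ⟨y, rfl⟩ := exists_eq_level hπ a x
    obtain ⟨y', rfl⟩ := exists_eq_level hπ a x'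
    rw [labelCoord_level, labelCoord_level, add_left_inj] at hxx'
    exact level_eq_of_intCast_eq hπ a hxx'
  · intro t
    obtain ⟨y, hy⟩ := ZMod.intCast_surjective (t - p a)
    exact ⟨level π q h a y, by rw [labelCoord_level, hy, sub_add_cancel]⟩

theorem exists_labelSet_equiv_zmod [Nonempty α] (hπ : (monodromy π).IsCycleOn Set.univ) :
    ∃ F : LabelSet π q h ≃ ZMod (∑ b, q b), ∀ x : α × ℤ,
      F (Quotient.mk _ (x.1, x.2 - 1)) = F (Quotient.mk _ x) - 1 := by
  have hsum : ∑ b, (q b : ZMod (∑ b, q b)) = 0 := by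
    rw [← Nat.cast_sum, ZMod.natCast_self]
  obtain ⟨p, hp⟩ := exists_potential_of_sum_eq_zero (Finset.coe_univ (α := α) ▸ hπ) hsum
  have hp' (a : α) : p (monodromy π a) = p a + q a := hp a (Finset.mem_univ a)
  refine ⟨Equiv.ofBijective _ (labelCoord_bijective hπ hp'), fun x => ?_⟩
  simp only [Equiv.ofBijective_apply, mk_eq_level, labelCoord_level]
  push_cast
  ring

theorem shift_on_labels_is_cyclic_general (hπ : (monodromy π).IsCycleOn Set.univ)
    (hq : 1 < ∑ a, q a) :
    ∃ e : Equiv.Perm (LabelSet π q h),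
      (∀ x : α × ℤ, e (Quotient.mk _ x) = Quotient.mk _ (x.1, x.2 - 1)) ∧
      Nat.card (LabelSet π q h) = ∑ a, q a ∧ e.IsCycle ∧ orderOf e = ∑ a, q a := by
  have : Nonempty α := not_isEmpty_iff.1 fun _ => by simp at hq
  have : Fact (1 < ∑ a, q a) := ⟨hq⟩
  obtain ⟨F, hF⟩ := exists_labelSet_equiv_zmod (h := h) hπ
  have hgen (t : ZMod (∑ a, q a)) : t ∈ AddSubgroup.zmultiples (-1 : ZMod (∑ a, q a)) := by
    rw [AddSubgroup.zmultiples_neg]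
    obtain ⟨n, rfl⟩ := ZMod.intCast_surjective t
    exact AddSubgroup.intCast_mem_zmultiples_one n
  refine ⟨F.symm.permCongr (Equiv.addRight (-1)), fun x => ?_, ?_, ?_, ?_⟩
  · rw [Equiv.permCongr_apply, Equiv.symm_apply_eq, hF]
    simp [sub_eq_add_neg]
  · rw [Nat.card_congr F, Nat.card_zmod]
  · exact isCycle_permCongr _ (isCycle_addRight (neg_ne_zero.2 one_ne_zero) hgen)
  · rw [orderOf_permCongr, orderOf_addRight, addOrderOf_neg, ZMod.addOrderOf_one]

end LabelSet

theorem isCycleOn_monodromy {α : Type*} {d : ℕ} {π : (α ≃ Fin d) × (α ≃ Fin d)}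
    (hcycle : Equiv.Perm.IsCycle (π.1.symm.trans π.2))
    (horder : orderOf (π.1.symm.trans π.2 : Equiv.Perm (Fin d)) = d) :
    (monodromy π).IsCycleOn Set.univ := by
  let _ : Fintype α := Fintype.ofEquiv (Fin d) π.1.symm
  have hconj : monodromy π = π.1.symm.permCongr (π.1.symm.trans π.2) := by
    ext a
    simp [monodromy]
  refine isCycleOn_univ_of_orderOf_eq_card (hconj ▸ isCycle_permCongr _ hcycle) ?_
  rw [hconj, orderOf_permCongr, horder, Fintype.card_congr π.1, Fintype.card_fin]

theorem qvec_pos {α : Type*} [DecidableEq α] (w l : ℕ → α) (k : ℕ) (a : α) : 0 < qvec w l k a := by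
  induction k with
  | zero => exact Nat.one_pos
  | succ k ih =>
    simp only [qvec]
    split_ifs <;> omega

theorem card_le_sum_qvec {α : Type*} [Fintype α] [DecidableEq α] (w l : ℕ → α) (k : ℕ) :
    Fintype.card α ≤ ∑ a, qvec w l k a := by
  simpa using Finset.univ.card_nsmul_le_sum (qvec w l k) 1 fun a _ => qvec_pos w l k a

/-- Let `π*` be a cyclic combinatorial datum and `γ : π → π*` a Rauzy path of
length `r` ending at `π*`, with return times `q^(r) = B_γ 1⃗` and
`N = Σ_χ q^(r)_χ`.  Then the shift `[α,i] ↦ [α,i−1]` on the label set `ℐ(γ)`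
(the quotient of `𝒜 × ℤ` by the identifications above) is a cyclic permutation
of `ℐ(γ)` of maximal order `N = |ℐ(γ)|`. -/
theorem shift_on_labels_is_cyclic
    (h2 : 2 ≤ Fintype.card A)
    (P : ℕ → (A ≃ Fin (Fintype.card A)) × (A ≃ Fin (Fintype.card A)))
    (w l : ℕ → A) (r : ℕ)
    (hpath : ∀ k < r, StepLab (P k) (P (k + 1)) (w k) (l k))
    (hcyc : Equiv.Perm.IsCycle
        (((P r).1.symm.trans (P r).2) : Equiv.Perm (Fin (Fintype.card A))) ∧
      orderOf (((P r).1.symm.trans (P r).2) : Equiv.Perm (Fin (Fintype.card A)))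
        = Fintype.card A)
    (h : A → ℕ) (hh : ∀ a : A, h a < qvec w l r a)
    (N : ℕ) (hN : N = ∑ a : A, qvec w l r a) :
    ∃ e : Equiv.Perm (Quotient (Relation.EqvGen.setoid
        (labelRel (P r) (qvec w l r) h))),
      (∀ p : A × ℤ,
        e (Quotient.mk (Relation.EqvGen.setoid (labelRel (P r) (qvec w l r) h)) p)
          = Quotient.mk (Relation.EqvGen.setoid (labelRel (P r) (qvec w l r) h))
              (p.1, p.2 - 1)) ∧
      Nat.card (Quotient (Relation.EqvGen.setoid
        (labelRel (P r) (qvec w l r) h))) = N ∧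
      e.IsCycle ∧ orderOf e = N := by
  subst hN
  exact shift_on_labels_is_cyclic_general (isCycleOn_monodromy hcyc.1 hcyc.2)
    (h2.trans (card_le_sum_qvec w l r))

end RauzyLabels
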